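/- Local asymptotic normality in the diffusive regime: let 0 < p < 3/4 and let (h_n) be a sequence of real numbers converging to a real number h. Then, almost surely, the log-likelihood ratio satisfies Λ_n(p + h_n (log n)^{−1/2}) − Λ_n(p) = h_n·Δ_n(p) − (h_n²/2)·(V_n/log n) + o(1) as n → ∞, where Δ_n(p) = 2 P_n/√(log n). -/

import Mathlib

open MeasureTheory ProbabilityTheory Filter Finset
open scoped BoundedContinuousFunction ENNReal NNReal Topology

noncomputable section

variable {Ω : Type*}

/-- Position of the elephant random walk: `S n = X 1 + ⋯ + X n`. -/
def erwS (X : ℕ → Ω → ℝ) (n : ℕ) (ω : Ω) : ℝ :=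
  ∑ k ∈ Finset.Icc 1 n, X k ω

/-- `V n = 4 ∑_{k=1}^{n-1} (S k / k)²`, the approximate conditional Fisher information. -/
def erwV (X : ℕ → Ω → ℝ) (n : ℕ) (ω : Ω) : ℝ :=
  4 * ∑ k ∈ Finset.Icc 1 (n - 1), (erwS X k ω / k) ^ 2

/-- The quasi-maximum likelihood estimator `p̂ n` of the memory parameter. -/
def erwPhat (X : ℕ → Ω → ℝ) (n : ℕ) (ω : Ω) : ℝ :=
  (∑ k ∈ Finset.Icc 1 (n - 1), (erwS X k ω / k) * (X (k + 1) ω + erwS X k ω / k)) /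
    (2 * ∑ k ∈ Finset.Icc 1 (n - 1), (erwS X k ω / k) ^ 2)

/-- The elephant random walk hypotheses with memory parameter `p ∈ [0,1]`:
the steps take values in `{-1, 1}`, are adapted to the filtration `ℱ`
(which plays the role of `σ(X_1, …, X_n)`), and
`E[X_{n+1} | ℱ_n] = (2p - 1) · S_n / n` almost surely. -/
def IsERW {m0 : MeasurableSpace Ω} (μ : Measure Ω) (ℱ : Filtration ℕ m0)
    (X : ℕ → Ω → ℝ) (p : ℝ) : Prop :=
  0 ≤ p ∧ p ≤ 1 ∧
  (∀ n, 1 ≤ n → ∀ ω, X n ω = 1 ∨ X n ω = -1) ∧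
  (∀ n, 1 ≤ n → Measurable[ℱ n] (X n)) ∧
  (∀ n, 1 ≤ n → μ[X (n + 1) | ℱ n] =ᵐ[μ] fun ω => (2 * p - 1) * (erwS X n ω / n))

/-- The score-type martingale `P n = ∑_{k=1}^{n-1} (S k / k) ε_{k+1} / (1 - a² (S k / k)²)`. -/
def erwP (X : ℕ → Ω → ℝ) (a : ℝ) (n : ℕ) (ω : Ω) : ℝ :=
  ∑ k ∈ Finset.Icc 1 (n - 1),
    (erwS X k ω / k) * (X (k + 1) ω - a * (erwS X k ω / k)) /
      (1 - a ^ 2 * (erwS X k ω / k) ^ 2)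

/-- The log-likelihood function (up to an additive term independent of `u`). -/
def erwLogLik (X : ℕ → Ω → ℝ) (u : ℝ) (n : ℕ) (ω : Ω) : ℝ :=
  ∑ k ∈ Finset.Icc 1 (n - 1),
    ((1 + X (k + 1) ω) / 2 * Real.log ((1 + (2 * u - 1) * (erwS X k ω / k)) / 2) +
      (1 - X (k + 1) ω) / 2 * Real.log ((1 - (2 * u - 1) * (erwS X k ω / k)) / 2))

/-! Each observed step has conditional likelihood `(1 + a W_k) / 2` with `W_k = X_{k+1} S_k / k`.
Thus the second-order Taylor expansion of the log-likelihood at displacement `d` has error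
`O(d² ∑ |S_k / k|³)`, and it is enough that `∑ |S_k / k|³ < ∞` almost surely. When `a < 1/2`, the
recursions of the second and fourth moments of `S_n` give `E S_n² = O(n)` and `E S_n⁴ = O(n²)`, so
that `E |S_n / n|³ = O(n^{-3/2})` by interpolation, which is summable. -/

section RealAnalysis

/-- A discrete Grönwall inequality: the gain `(n + 1) ^ (q + 1) - n ^ (q + 1) ≥ (q + 1) * n ^ q`
absorbs the growth rate `α` as soon as `α < q + 1`. -/
lemma exists_le_mul_pow_of_le_one_add_div_mul_add {u : ℕ → ℝ} {α B : ℝ} {q : ℕ}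
    (hα : α < q + 1) (hu : ∀ n, 0 ≤ u n)
    (hrec : ∀ n, 1 ≤ n → u (n + 1) ≤ (1 + α / n) * u n + B * n ^ q) :
    ∃ C, ∀ n, 1 ≤ n → u n ≤ C * n ^ (q + 1) := by
  set β := max α 0
  have hβ : 0 < q + 1 - β := sub_pos.2 (max_lt hα (by positivity))
  set C := max (u 1) (B / (q + 1 - β))
  have hC : 0 ≤ C := (hu 1).trans (le_max_left ..)
  have hBC : β * C + B ≤ (q + 1) * C := by
    have := (div_le_iff₀ hβ).1 (le_max_right (u 1) (B / (q + 1 - β)))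
    linarith
  refine ⟨C, fun n hn ↦ ?_⟩
  induction n, hn using Nat.le_induction with
  | base => rw [Nat.cast_one, one_pow, mul_one]; exact le_max_left ..
  | succ n hn ih =>
    have hn0 : (0 : ℝ) < n := by exact_mod_cast hn
    have bernoulli : (n : ℝ) ^ (q + 1) + (q + 1) * n ^ q ≤ (n + 1 : ℝ) ^ (q + 1) := by
      have := one_add_mul_sub_le_pow (a := 1 + (n : ℝ)⁻¹) (by linarith [inv_pos.2 hn0]) (q + 1)
      calc (n : ℝ) ^ (q + 1) + (q + 1) * n ^ q
          = n ^ (q + 1) * (1 + ↑(q + 1) * (1 + (n : ℝ)⁻¹ - 1)) := by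
            push_cast; field_simp; ring
        _ ≤ n ^ (q + 1) * (1 + (n : ℝ)⁻¹) ^ (q + 1) := by gcongr
        _ = (n + 1 : ℝ) ^ (q + 1) := by rw [← mul_pow]; field_simp
    calc u (n + 1) ≤ (1 + α / n) * u n + B * n ^ q := hrec n hn
      _ ≤ (1 + β / n) * (C * n ^ (q + 1)) + B * n ^ q := by
          gcongr
          · exact hu n
          · exact le_max_left ..
      _ = C * n ^ (q + 1) + (β * C + B) * n ^ q := by field_simp; ring
      _ ≤ C * n ^ (q + 1) + (q + 1) * C * n ^ q := by gcongr
      _ = C * (n ^ (q + 1) + (q + 1) * n ^ q) := by ring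
      _ ≤ C * (↑(n + 1) : ℝ) ^ (q + 1) := by push_cast; gcongr

lemma abs_log_one_add_sub_add_sq_div_two_le {y : ℝ} (hy : |y| ≤ 1 / 2) :
    |Real.log (1 + y) - y + y ^ 2 / 2| ≤ 2 * |y| ^ 3 := by
  have taylor := Real.abs_log_sub_add_sum_range_le (x := -y) (by rw [abs_neg]; linarith) 2
  simp only [Finset.sum_range_succ, Finset.sum_range_zero, abs_neg, sub_neg_eq_add] at taylor
  calc |Real.log (1 + y) - y + y ^ 2 / 2| ≤ |y| ^ 3 / (1 - |y|) := by
        convert taylor using 2; norm_num; ring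
    _ ≤ 2 * |y| ^ 3 := by
        rw [div_le_iff₀ (by linarith)]
        nlinarith [pow_nonneg (abs_nonneg y) 3]

variable {a w : ℝ}

lemma one_sub_abs_le_one_add_mul (hw : |w| ≤ 1) : 1 - |a| ≤ 1 + a * w := by
  have : |a * w| ≤ |a| := by
    rw [abs_mul]; exact mul_le_of_le_one_right (abs_nonneg a) hw
  linarith [neg_abs_le (a * w)]

lemma abs_sq_sub_div_one_add_mul_sq_le (ha : |a| < 1) (hw : |w| ≤ 1) :
    |w ^ 2 - (w / (1 + a * w)) ^ 2| ≤ 3 * |w| ^ 3 / (1 - |a|) ^ 2 := by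
  have hc : 0 < 1 - |a| := by linarith
  have hq : 1 - |a| ≤ 1 + a * w := one_sub_abs_le_one_add_mul hw
  have hq0 : 0 < 1 + a * w := hc.trans_le hq
  have haw : |a * w| ≤ |w| := by
    rw [abs_mul]; exact mul_le_of_le_one_left (abs_nonneg w) ha.le
  have h_three : |2 + a * w| ≤ 3 :=
    (abs_add_le 2 (a * w)).trans (by rw [abs_two]; linarith)
  have h_factor : w ^ 2 - (w / (1 + a * w)) ^ 2
      = (2 + a * w) * w ^ 2 * (a * w) / (1 + a * w) ^ 2 := by
    have hq2 : (1 + a * w) ^ 2 ≠ 0 := pow_ne_zero 2 hq0.ne'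
    rw [div_pow, eq_div_iff hq2, sub_mul, div_mul_cancel₀ _ hq2]
    ring
  calc |w ^ 2 - (w / (1 + a * w)) ^ 2|
      = |2 + a * w| * |w| ^ 2 * |a * w| / (1 + a * w) ^ 2 := by
        rw [h_factor, abs_div, abs_mul, abs_mul, abs_pow, abs_of_pos (pow_pos hq0 2)]
    _ ≤ 3 * |w| ^ 2 * |w| / (1 - |a|) ^ 2 := by gcongr
    _ = 3 * |w| ^ 3 / (1 - |a|) ^ 2 := by ring

lemma log_add_mul_sub_log_eq_log_one_add {δ : ℝ} (hq : 0 < 1 + a * w)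
    (hy : 0 < 1 + δ * (w / (1 + a * w))) :
    Real.log ((1 + (a + δ) * w) / 2) - Real.log ((1 + a * w) / 2)
      = Real.log (1 + δ * (w / (1 + a * w))) := by
  have h_factor : (1 + (a + δ) * w) / 2 = (1 + a * w) / 2 * (1 + δ * (w / (1 + a * w))) := by
    field_simp; ring
  rw [h_factor, Real.log_mul (by positivity) hy.ne', add_sub_cancel_left]

/-- The coefficient of `δ ^ 2` in the Taylor expansion is `-(w / (1 + a * w)) ^ 2 / 2`; replacing
it by `-w ^ 2 / 2` costs no more than the cubic remainder. -/
lemma abs_log_add_sub_log_sub_quadratic_le {δ : ℝ} (ha : |a| < 1) (hw : |w| ≤ 1)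
    (hδ : |δ| ≤ (1 - |a|) / 2) :
    |Real.log ((1 + (a + δ) * w) / 2) - Real.log ((1 + a * w) / 2)
        - (δ * (w / (1 + a * w)) - δ ^ 2 / 2 * w ^ 2)|
      ≤ 5 / 2 * (δ / (1 - |a|)) ^ 2 * |w| ^ 3 := by
  have hc : 0 < 1 - |a| := by linarith
  have hq : 1 - |a| ≤ 1 + a * w := one_sub_abs_le_one_add_mul hw
  have hq0 : 0 < 1 + a * w := hc.trans_le hq
  set r := w / (1 + a * w) with hr
  have hδ_half : |δ| / (1 - |a|) ≤ 1 / 2 := by rw [div_le_iff₀ hc]; linarith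
  have h_abs : |δ * r| ≤ |δ| / (1 - |a|) * |w| := by
    rw [abs_mul, hr, abs_div, abs_of_pos hq0, div_mul_eq_mul_div, mul_div_assoc]
    gcongr
  have h_half : |δ * r| ≤ 1 / 2 :=
    h_abs.trans ((mul_le_of_le_one_right (by positivity) hw).trans hδ_half)
  have h_cubic : 2 * |δ * r| ^ 3 ≤ (δ / (1 - |a|)) ^ 2 * |w| ^ 3 :=
    calc 2 * |δ * r| ^ 3 ≤ 2 * (|δ| / (1 - |a|) * |w|) ^ 3 := by gcongr
      _ = 2 * (|δ| / (1 - |a|)) * ((|δ| / (1 - |a|)) ^ 2 * |w| ^ 3) := by ring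
      _ ≤ 1 * ((|δ| / (1 - |a|)) ^ 2 * |w| ^ 3) := by gcongr; linarith
      _ = (δ / (1 - |a|)) ^ 2 * |w| ^ 3 := by rw [one_mul, div_pow, sq_abs, div_pow]
  have h_quadratic : δ ^ 2 / 2 * |w ^ 2 - r ^ 2| ≤ 3 / 2 * (δ / (1 - |a|)) ^ 2 * |w| ^ 3 :=
    calc δ ^ 2 / 2 * |w ^ 2 - r ^ 2| ≤ δ ^ 2 / 2 * (3 * |w| ^ 3 / (1 - |a|) ^ 2) := by
          gcongr; exact abs_sq_sub_div_one_add_mul_sq_le ha hw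
      _ = 3 / 2 * (δ / (1 - |a|)) ^ 2 * |w| ^ 3 := by rw [div_pow]; ring
  rw [log_add_mul_sub_log_eq_log_one_add hq0 (by linarith [neg_abs_le (δ * r)])]
  calc |Real.log (1 + δ * r) - (δ * r - δ ^ 2 / 2 * w ^ 2)|
      = |(Real.log (1 + δ * r) - δ * r + (δ * r) ^ 2 / 2) + δ ^ 2 / 2 * (w ^ 2 - r ^ 2)| := by
        ring_nf
    _ ≤ 2 * |δ * r| ^ 3 + δ ^ 2 / 2 * |w ^ 2 - r ^ 2| := by
        refine (abs_add_le ..).trans (add_le_add (abs_log_one_add_sub_add_sq_div_two_le h_half) ?_)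
        rw [abs_mul, abs_of_nonneg (by positivity : 0 ≤ δ ^ 2 / 2)]
    _ ≤ 5 / 2 * (δ / (1 - |a|)) ^ 2 * |w| ^ 3 := by linarith

end RealAnalysis

section Integration

variable {m0 : MeasurableSpace Ω} {μ : Measure Ω}

lemma ae_summable_norm_of_summable_integral_norm {ι E : Type*} [Countable ι]
    [NormedAddCommGroup E] {f : ι → Ω → E} (hf : ∀ i, Integrable (f i) μ)
    (hsum : Summable fun i ↦ ∫ ω, ‖f i ω‖ ∂μ) : ∀ᵐ ω ∂μ, Summable fun i ↦ ‖f i ω‖ := by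
  refine summable_norm_of_tsum_eLpNorm_ne_top le_rfl (fun i ↦ (hf i).aestronglyMeasurable) ?_
  simp_rw [eLpNorm_one_eq_lintegral_enorm, ← ofReal_integral_norm_eq_lintegral_enorm (hf _)]
  exact hsum.tsum_ofReal_ne_top

lemma integral_abs_pow_three_le {f : Ω → ℝ} (h2 : Integrable (fun ω ↦ f ω ^ 2) μ)
    (h4 : Integrable (fun ω ↦ f ω ^ 4) μ) {t : ℝ} (ht : 0 < t) :
    ∫ ω, |f ω| ^ 3 ∂μ ≤ (t * ∫ ω, f ω ^ 2 ∂μ + t⁻¹ * ∫ ω, f ω ^ 4 ∂μ) / 2 := by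
  have amgm (s : ℝ) : |s| ^ 3 ≤ (t * s ^ 2 + t⁻¹ * s ^ 4) / 2 := by
    have h_sq : (t * |s| ^ 2 + t⁻¹ * |s| ^ 4) / 2 - |s| ^ 3
        = |s| ^ 2 / (2 * t) * (t - |s|) ^ 2 := by
      field_simp; ring
    rw [← sq_abs, ← (show Even 4 by decide).pow_abs s, ← sub_nonneg, h_sq]
    positivity
  rw [← integral_const_mul, ← integral_const_mul, ← integral_add (by fun_prop) (by fun_prop),
    ← integral_div]
  exact integral_mono_of_nonneg (ae_of_all _ fun ω ↦ by positivity) (by fun_prop)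
    (ae_of_all _ fun ω ↦ amgm (f ω))

end Integration

lemma erwS_succ (X : ℕ → Ω → ℝ) (n : ℕ) (ω : Ω) :
    erwS X (n + 1) ω = erwS X n ω + X (n + 1) ω :=
  Finset.sum_Icc_succ_top (by omega) _

section Path

variable {X : ℕ → Ω → ℝ} {ω : Ω}

lemma abs_erwS_le (hX : ∀ n, 1 ≤ n → |X n ω| ≤ 1) (n : ℕ) : |erwS X n ω| ≤ n :=
  calc |erwS X n ω| ≤ ∑ k ∈ Icc 1 n, |X k ω| := abs_sum_le_sum_abs ..
    _ ≤ ∑ k ∈ Icc 1 n, 1 := sum_le_sum fun k hk ↦ hX k (mem_Icc.1 hk).1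
    _ = n := by simp

lemma abs_erwS_div_le_one (hX : ∀ n, 1 ≤ n → |X n ω| ≤ 1) (n : ℕ) : |erwS X n ω / n| ≤ 1 := by
  rw [abs_div, Nat.abs_cast]
  exact div_le_one_of_le₀ (abs_erwS_le hX n) n.cast_nonneg

/-- The signed proportion `X_{k+1} S_k / k`: as `X_{k+1} = ±1`, the conditional probability of
the observed step `X_{k+1}` is `(1 + a X_{k+1} S_k / k) / 2`, so that the likelihood, the score
and the information are all sums of functions of this one quantity. -/
def erwW (X : ℕ → Ω → ℝ) (k : ℕ) (ω : Ω) : ℝ :=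
  X (k + 1) ω * (erwS X k ω / k)

lemma abs_erwW (hX : ∀ n, 1 ≤ n → |X n ω| = 1) (k : ℕ) : |erwW X k ω| = |erwS X k ω / k| := by
  rw [erwW, abs_mul, hX (k + 1) (by omega), one_mul]

lemma abs_erwW_le_one (hX : ∀ n, 1 ≤ n → |X n ω| = 1) (k : ℕ) : |erwW X k ω| ≤ 1 :=
  (abs_erwW hX k).trans_le (abs_erwS_div_le_one (fun n hn ↦ (hX n hn).le) k)

lemma erwLogLik_eq_sum_erwW (hX : ∀ n, 1 ≤ n → |X n ω| = 1) (u : ℝ) (n : ℕ) :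
    erwLogLik X u n ω = ∑ k ∈ Icc 1 (n - 1), Real.log ((1 + (2 * u - 1) * erwW X k ω) / 2) := by
  refine sum_congr rfl fun k _ ↦ ?_
  rcases eq_or_eq_neg_of_abs_eq (hX (k + 1) (by omega)) with h | h <;>
    simp [erwW, h, sub_eq_add_neg]

lemma erwP_eq_sum_erwW (hX : ∀ n, 1 ≤ n → |X n ω| = 1) {a : ℝ} (ha : |a| < 1) (n : ℕ) :
    erwP X a n ω = ∑ k ∈ Icc 1 (n - 1), erwW X k ω / (1 + a * erwW X k ω) := by
  refine sum_congr rfl fun k _ ↦ ?_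
  set w := erwW X k ω
  have hw : |w| ≤ 1 := abs_erwW_le_one hX k
  have h_sub : 1 - a * w ≠ 0 := by
    have := one_sub_abs_le_one_add_mul (a := -a) hw
    rw [abs_neg] at this
    linarith
  have h_num : erwS X k ω / k * (X (k + 1) ω - a * (erwS X k ω / k)) = w * (1 - a * w) := by
    rcases eq_or_eq_neg_of_abs_eq (hX (k + 1) (by omega)) with h | h <;>
      simp only [w, erwW, h] <;> ring
  have h_den : 1 - a ^ 2 * (erwS X k ω / k) ^ 2 = (1 + a * w) * (1 - a * w) := by
    rw [← sq_abs (erwS X k ω / k), ← abs_erwW hX, sq_abs]; ring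
  rw [h_num, h_den, mul_div_mul_right _ _ h_sub]

lemma erwV_eq_sum_erwW (hX : ∀ n, 1 ≤ n → |X n ω| = 1) (n : ℕ) :
    erwV X n ω = 4 * ∑ k ∈ Icc 1 (n - 1), erwW X k ω ^ 2 := by
  simp only [erwV, ← sq_abs (erwW X _ ω), abs_erwW hX, sq_abs]

lemma abs_erwLogLik_sub_sub_quadratic_le (hX : ∀ n, 1 ≤ n → |X n ω| = 1)
    {p d : ℝ} (hp : |2 * p - 1| < 1) (hd : |d| ≤ (1 - |2 * p - 1|) / 4) (n : ℕ) :
    |erwLogLik X (p + d) n ω - erwLogLik X p n ω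
        - (2 * d * erwP X (2 * p - 1) n ω - d ^ 2 / 2 * erwV X n ω)|
      ≤ 10 * (d / (1 - |2 * p - 1|)) ^ 2 * ∑ k ∈ Icc 1 (n - 1), |erwS X k ω / k| ^ 3 := by
  have hδ : |2 * d| ≤ (1 - |2 * p - 1|) / 2 := by rw [abs_mul, abs_two]; linarith
  have h_shift : 2 * (p + d) - 1 = 2 * p - 1 + 2 * d := by ring
  rw [erwLogLik_eq_sum_erwW hX, erwLogLik_eq_sum_erwW hX, erwP_eq_sum_erwW hX hp,
    erwV_eq_sum_erwW hX, h_shift, ← mul_assoc, mul_sum, mul_sum, mul_sum, ← sum_sub_distrib,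
    ← sum_sub_distrib, ← sum_sub_distrib]
  refine (abs_sum_le_sum_abs ..).trans (sum_le_sum fun k _ ↦ ?_)
  rw [← abs_erwW hX]
  calc |_ - _ - (_ - d ^ 2 / 2 * 4 * erwW X k ω ^ 2)|
      = |_ - _ - (_ - (2 * d) ^ 2 / 2 * erwW X k ω ^ 2)| := by
        congr 3; ring
    _ ≤ 5 / 2 * (2 * d / (1 - |2 * p - 1|)) ^ 2 * |erwW X k ω| ^ 3 :=
        abs_log_add_sub_log_sub_quadratic_le hp (abs_erwW_le_one hX k) hδ
    _ = 10 * (d / (1 - |2 * p - 1|)) ^ 2 * |erwW X k ω| ^ 3 := by ring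

lemma tendsto_erwLogLik_sub_sub_quadratic (hX : ∀ n, 1 ≤ n → |X n ω| = 1)
    {p : ℝ} (hp : |2 * p - 1| < 1) (hsum : Summable fun n : ℕ ↦ |erwS X n ω / n| ^ 3)
    {d : ℕ → ℝ} (hd : Tendsto d atTop (𝓝 0)) :
    Tendsto (fun n ↦ erwLogLik X (p + d n) n ω - erwLogLik X p n ω
        - (2 * d n * erwP X (2 * p - 1) n ω - d n ^ 2 / 2 * erwV X n ω)) atTop (𝓝 0) := by
  have h_bound : Tendsto (fun n ↦ 10 * (d n / (1 - |2 * p - 1|)) ^ 2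
      * ∑' k : ℕ, |erwS X k ω / k| ^ 3) atTop (𝓝 0) := by
    simpa using (((hd.div_const (1 - |2 * p - 1|)).pow 2).const_mul 10).mul_const _
  have h_small : ∀ᶠ n in atTop, |d n| ≤ (1 - |2 * p - 1|) / 4 :=
    hd.abs.eventually_le_const (by rw [abs_zero]; linarith)
  refine squeeze_zero_norm' (h_small.mono fun n hn ↦ ?_) h_bound
  refine (abs_erwLogLik_sub_sub_quadratic_le hX hp hn n).trans ?_
  gcongr
  exact hsum.sum_le_tsum _ fun k _ ↦ by positivity

end Path

namespace IsERW

variable {m0 : MeasurableSpace Ω} {μ : Measure Ω} {ℱ : Filtration ℕ m0} {X : ℕ → Ω → ℝ} {p : ℝ}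

lemma abs_step (hE : IsERW μ ℱ X p) {n : ℕ} (hn : 1 ≤ n) (ω : Ω) : |X n ω| = 1 := by
  obtain ⟨-, -, h_sign, -, -⟩ := hE
  rcases h_sign n hn ω with h | h <;> simp [h]

lemma measurable_erwS (hE : IsERW μ ℱ X p) (n : ℕ) : Measurable[ℱ n] (erwS X n) := by
  obtain ⟨-, -, -, h_adapted, -⟩ := hE
  refine Finset.measurable_fun_sum _ fun k hk ↦ ?_
  obtain ⟨hk1, hkn⟩ := Finset.mem_Icc.1 hk
  exact (h_adapted k hk1).mono (ℱ.mono hkn) le_rfl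

lemma aestronglyMeasurable_erwS (hE : IsERW μ ℱ X p) (n : ℕ) :
    AEStronglyMeasurable (erwS X n) μ :=
  ((hE.measurable_erwS n).mono (ℱ.le n) le_rfl).aestronglyMeasurable

lemma aestronglyMeasurable_step (hE : IsERW μ ℱ X p) {n : ℕ} (hn : 1 ≤ n) :
    AEStronglyMeasurable (X n) μ :=
  let ⟨_, _, _, h_adapted, _⟩ := hE
  ((h_adapted n hn).mono (ℱ.le n) le_rfl).aestronglyMeasurable

lemma integrable_mul_step (hE : IsERW μ ℱ X p) {ξ : Ω → ℝ} (hξ : Integrable ξ μ) {n : ℕ}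
    (hn : 1 ≤ n) : Integrable (fun ω ↦ ξ ω * X n ω) μ :=
  hξ.mul_bdd (hE.aestronglyMeasurable_step hn) (ae_of_all _ fun ω ↦ (hE.abs_step hn ω).le)

section FiniteMeasure

variable [IsFiniteMeasure μ]

lemma integrable_erwS_pow (hE : IsERW μ ℱ X p) (n j : ℕ) :
    Integrable (fun ω ↦ erwS X n ω ^ j) μ := by
  refine .of_bound ((hE.aestronglyMeasurable_erwS n).pow j) ((n : ℝ) ^ j)
    (ae_of_all _ fun ω ↦ ?_)
  rw [norm_pow]
  exact pow_le_pow_left₀ (norm_nonneg _) (abs_erwS_le (fun k hk ↦ (hE.abs_step hk ω).le) n) j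

lemma integral_mul_step_succ (hE : IsERW μ ℱ X p) {n : ℕ} (hn : 1 ≤ n) {ξ : Ω → ℝ}
    (hξ : Measurable[ℱ n] ξ) (hξ_int : Integrable ξ μ) :
    ∫ ω, ξ ω * X (n + 1) ω ∂μ = (2 * p - 1) / n * ∫ ω, ξ ω * erwS X n ω ∂μ := by
  have h_step : Integrable (X (n + 1)) μ := by
    simpa using hE.integrable_mul_step (integrable_const 1) (Nat.le_add_left 1 n)
  have h_pull := condExp_mul_of_stronglyMeasurable_left hξ.stronglyMeasurable
    (hE.integrable_mul_step hξ_int (Nat.le_add_left 1 n)) h_step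
  obtain ⟨-, -, -, -, h_condExp⟩ := hE
  calc ∫ ω, ξ ω * X (n + 1) ω ∂μ
      = ∫ ω, (μ[ξ * X (n + 1) | ℱ n]) ω ∂μ := (integral_condExp (ℱ.le n)).symm
    _ = ∫ ω, (2 * p - 1) / n * (ξ ω * erwS X n ω) ∂μ := by
        refine integral_congr_ae ?_
        filter_upwards [h_pull, h_condExp n hn] with ω h_pull_ω h_condExp_ω
        rw [h_pull_ω, Pi.mul_apply, h_condExp_ω]
        ring
    _ = (2 * p - 1) / n * ∫ ω, ξ ω * erwS X n ω ∂μ := integral_const_mul ..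

end FiniteMeasure

variable [IsProbabilityMeasure μ]

lemma integral_erwS_succ_sq (hE : IsERW μ ℱ X p) {n : ℕ} (hn : 1 ≤ n) :
    ∫ ω, erwS X (n + 1) ω ^ 2 ∂μ
      = (1 + 2 * (2 * p - 1) / n) * ∫ ω, erwS X n ω ^ 2 ∂μ + 1 := by
  have h2 := hE.integrable_erwS_pow n 2
  have h1 : Integrable (fun ω ↦ 2 * erwS X n ω) μ := by
    simpa using (hE.integrable_erwS_pow n 1).const_mul 2
  have h_expand (ω : Ω) : erwS X (n + 1) ω ^ 2
      = erwS X n ω ^ 2 + 1 + 2 * erwS X n ω * X (n + 1) ω := by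
    rw [erwS_succ]
    rcases eq_or_eq_neg_of_abs_eq (hE.abs_step (Nat.le_add_left 1 n) ω) with h | h <;>
      rw [h] <;> ring
  simp only [h_expand]
  rw [integral_add (by fun_prop) (hE.integrable_mul_step h1 (Nat.le_add_left 1 n)),
    hE.integral_mul_step_succ hn ((hE.measurable_erwS n).const_mul 2) h1,
    integral_add h2 (integrable_const 1)]
  simp only [mul_assoc, ← pow_two, integral_const_mul, integral_const, probReal_univ, one_smul]
  ring

lemma integral_erwS_succ_pow_four (hE : IsERW μ ℱ X p) {n : ℕ} (hn : 1 ≤ n) :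
    ∫ ω, erwS X (n + 1) ω ^ 4 ∂μ
      = (1 + 4 * (2 * p - 1) / n) * ∫ ω, erwS X n ω ^ 4 ∂μ
        + (6 + 4 * (2 * p - 1) / n) * ∫ ω, erwS X n ω ^ 2 ∂μ + 1 := by
  have h4 := hE.integrable_erwS_pow n 4
  have h2 := hE.integrable_erwS_pow n 2
  have h31 : Integrable (fun ω ↦ 4 * erwS X n ω ^ 3 + 4 * erwS X n ω) μ :=
    ((hE.integrable_erwS_pow n 3).const_mul 4).add
      (by simpa using (hE.integrable_erwS_pow n 1).const_mul 4)
  have h31_meas : Measurable[ℱ n] fun ω ↦ 4 * erwS X n ω ^ 3 + 4 * erwS X n ω :=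
    (((hE.measurable_erwS n).pow_const 3).const_mul 4).add ((hE.measurable_erwS n).const_mul 4)
  have h_expand (ω : Ω) : erwS X (n + 1) ω ^ 4 = erwS X n ω ^ 4 + 6 * erwS X n ω ^ 2 + 1
      + (4 * erwS X n ω ^ 3 + 4 * erwS X n ω) * X (n + 1) ω := by
    rw [erwS_succ]
    rcases eq_or_eq_neg_of_abs_eq (hE.abs_step (Nat.le_add_left 1 n) ω) with h | h <;>
      rw [h] <;> ring
  have h_drift (ω : Ω) : (4 * erwS X n ω ^ 3 + 4 * erwS X n ω) * erwS X n ω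
      = 4 * erwS X n ω ^ 4 + 4 * erwS X n ω ^ 2 := by ring
  simp only [h_expand]
  rw [integral_add (by fun_prop) (hE.integrable_mul_step h31 (Nat.le_add_left 1 n)),
    hE.integral_mul_step_succ hn h31_meas h31, integral_add (by fun_prop) (by fun_prop),
    integral_add (by fun_prop) (by fun_prop)]
  simp only [h_drift]
  rw [integral_add (by fun_prop) (by fun_prop)]
  simp only [integral_const_mul, integral_const, probReal_univ, one_smul]
  ring

lemma exists_integral_erwS_sq_le (hE : IsERW μ ℱ X p) (hp : p < 3 / 4) :
    ∃ C, ∀ n, 1 ≤ n → ∫ ω, erwS X n ω ^ 2 ∂μ ≤ C * n := by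
  have h_growth : 2 * (2 * p - 1) < (0 : ℕ) + 1 := by push_cast; linarith
  obtain ⟨C, hC⟩ := exists_le_mul_pow_of_le_one_add_div_mul_add (B := 1) h_growth
    (fun n ↦ integral_nonneg fun ω ↦ sq_nonneg (erwS X n ω))
    (fun n hn ↦ by rw [hE.integral_erwS_succ_sq hn, pow_zero, mul_one])
  exact ⟨C, fun n hn ↦ by simpa using hC n hn⟩

lemma exists_integral_erwS_pow_four_le (hE : IsERW μ ℱ X p) (hp : p < 3 / 4) :
    ∃ D, ∀ n, 1 ≤ n → ∫ ω, erwS X n ω ^ 4 ∂μ ≤ D * n ^ 2 := by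
  obtain ⟨C, hC⟩ := hE.exists_integral_erwS_sq_le hp
  have h_growth : 4 * (2 * p - 1) < (1 : ℕ) + 1 := by push_cast; linarith
  refine exists_le_mul_pow_of_le_one_add_div_mul_add (B := 8 * C + 1) h_growth
    (fun n ↦ integral_nonneg fun ω ↦ by positivity) fun n hn ↦ ?_
  have hn1 : (1 : ℝ) ≤ n := by exact_mod_cast hn
  have h_coeff : 6 + 4 * (2 * p - 1) / n ≤ 8 := by
    have : 4 * (2 * p - 1) / n ≤ 2 := by rw [div_le_iff₀ (by linarith)]; linarith
    linarith
  have h_sq : (6 + 4 * (2 * p - 1) / n) * ∫ ω, erwS X n ω ^ 2 ∂μ ≤ 8 * (C * n) :=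
    (mul_le_mul_of_nonneg_right h_coeff (integral_nonneg fun ω ↦ sq_nonneg _)).trans
      (mul_le_mul_of_nonneg_left (hC n hn) (by norm_num))
  rw [hE.integral_erwS_succ_pow_four hn, pow_one]
  linarith

lemma exists_integral_abs_erwS_div_pow_three_le (hE : IsERW μ ℱ X p) (hp : p < 3 / 4) :
    ∃ K, ∀ n : ℕ, 1 ≤ n → ∫ ω, |erwS X n ω / n| ^ 3 ∂μ ≤ K * (n : ℝ) ^ (-3 / 2 : ℝ) := by
  obtain ⟨C, hC⟩ := hE.exists_integral_erwS_sq_le hp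
  obtain ⟨D, hD⟩ := hE.exists_integral_erwS_pow_four_le hp
  refine ⟨(C + D) / 2, fun n hn ↦ ?_⟩
  have hn0 : (0 : ℝ) < n := by exact_mod_cast hn
  have h_sqrt : (n : ℝ) ^ (-3 / 2 : ℝ) = √n * n / n ^ 3 := by
    rw [Real.sqrt_eq_rpow, ← Real.rpow_natCast, ← Real.rpow_add_one hn0.ne', ← Real.rpow_sub hn0]
    norm_num
  have h_inv : (√n)⁻¹ * (n : ℝ) ^ 2 = √n * n := by
    rw [inv_mul_eq_iff_eq_mul₀ (by positivity), ← mul_assoc, Real.mul_self_sqrt hn0.le, sq]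
  calc ∫ ω, |erwS X n ω / n| ^ 3 ∂μ = (∫ ω, |erwS X n ω| ^ 3 ∂μ) / n ^ 3 := by
        simp only [abs_div, Nat.abs_cast, div_pow, integral_div]
    _ ≤ (√n * ∫ ω, erwS X n ω ^ 2 ∂μ + (√n)⁻¹ * ∫ ω, erwS X n ω ^ 4 ∂μ) / 2 / n ^ 3 := by
        gcongr
        exact integral_abs_pow_three_le (hE.integrable_erwS_pow n 2) (hE.integrable_erwS_pow n 4)
          (Real.sqrt_pos.2 hn0)
    _ ≤ (√n * (C * n) + (√n)⁻¹ * (D * n ^ 2)) / 2 / n ^ 3 := by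
        gcongr
        · exact hC n hn
        · exact hD n hn
    _ = (C + D) / 2 * (n : ℝ) ^ (-3 / 2 : ℝ) := by
        rw [h_sqrt, mul_left_comm _ D, h_inv]; ring

lemma ae_summable_abs_erwS_div_pow_three (hE : IsERW μ ℱ X p) (hp : p < 3 / 4) :
    ∀ᵐ ω ∂μ, Summable fun n : ℕ ↦ |erwS X n ω / n| ^ 3 := by
  obtain ⟨K, hK⟩ := hE.exists_integral_abs_erwS_div_pow_three_le hp
  have h_int (n : ℕ) : Integrable (fun ω ↦ (erwS X n ω / n) ^ 3) μ := by
    simpa only [div_pow] using (hE.integrable_erwS_pow n 3).div_const _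
  have h_rpow : Summable fun n : ℕ ↦ K * (n : ℝ) ^ (-3 / 2 : ℝ) :=
    (Real.summable_nat_rpow.2 (by norm_num)).mul_left K
  have h_sum : Summable fun n : ℕ ↦ ∫ ω, ‖(erwS X n ω / n) ^ 3‖ ∂μ := by
    refine h_rpow.of_norm_bounded_eventually_nat ?_
    filter_upwards [eventually_ge_atTop 1] with n hn
    rw [Real.norm_of_nonneg (integral_nonneg fun ω ↦ norm_nonneg _)]
    simpa only [norm_pow, Real.norm_eq_abs] using hK n hn
  simpa only [norm_pow, Real.norm_eq_abs] using
    ae_summable_norm_of_summable_integral_norm h_int h_sum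

end IsERW

lemma isLittleO_one_sqrt_log_natCast :
    (fun _ ↦ (1 : ℝ)) =o[atTop] fun n : ℕ ↦ Real.sqrt (Real.log n) :=
  (Asymptotics.isLittleO_one_left_iff ℝ).2 <| tendsto_norm_atTop_atTop.comp <|
    Real.tendsto_sqrt_atTop.comp <| Real.tendsto_log_atTop.comp tendsto_natCast_atTop_atTop

theorem erw_lan_diffusive_general
    {m0 : MeasurableSpace Ω} (μ : Measure Ω) [IsProbabilityMeasure μ]
    (ℱ : Filtration ℕ m0) (X : ℕ → Ω → ℝ) (p : ℝ)
    (hERW : IsERW μ ℱ X p) (hp : 0 < p) (hp' : p < 3 / 4) :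
    ∀ᵐ ω ∂μ, ∀ hn : ℕ → ℝ, (hn =o[atTop] fun n : ℕ ↦ Real.sqrt (Real.log n)) →
      Tendsto (fun n =>
        (erwLogLik X (p + hn n / Real.sqrt (Real.log n)) n ω - erwLogLik X p n ω) -
          (hn n * (2 * erwP X (2 * p - 1) n ω / Real.sqrt (Real.log n)) -
            hn n ^ 2 / 2 * (erwV X n ω / Real.log n)))
      atTop (𝓝 0) := by
  have ha : |2 * p - 1| < 1 := abs_lt.2 ⟨by linarith, by linarith⟩
  filter_upwards [hERW.ae_summable_abs_erwS_div_pow_three hp'] with ω h_sum hn h_small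
  refine (tendsto_erwLogLik_sub_sub_quadratic (fun n h1 ↦ hERW.abs_step h1 ω) ha h_sum
    h_small.tendsto_div_nhds_zero).congr fun n ↦ ?_
  rw [div_pow, Real.sq_sqrt (Real.log_natCast_nonneg n)]
  ring

/-- Local asymptotic normality in the diffusive regime `0 < p < 3/4`: almost surely,
`ℓ_n(p + h_n (log n)^{-1/2}) - ℓ_n(p) = h_n Δ_n(p) - (h_n²/2) V_n / log n + o(1)`,
where `Δ_n(p) = 2 P_n / √(log n)`. -/
theorem erw_lan_diffusive
    {m0 : MeasurableSpace Ω} (μ : Measure Ω) [IsProbabilityMeasure μ]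
    (ℱ : Filtration ℕ m0) (X : ℕ → Ω → ℝ) (p : ℝ)
    (hERW : IsERW μ ℱ X p) (hp : 0 < p) (hp' : p < 3 / 4)
    (hn : ℕ → ℝ) (h : ℝ) (hconv : Tendsto hn atTop (𝓝 h)) :
    ∀ᵐ ω ∂μ, Tendsto (fun n =>
        (erwLogLik X (p + hn n / Real.sqrt (Real.log n)) n ω - erwLogLik X p n ω) -
          (hn n * (2 * erwP X (2 * p - 1) n ω / Real.sqrt (Real.log n)) -
            hn n ^ 2 / 2 * (erwV X n ω / Real.log n)))
      atTop (𝓝 0) := by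
  filter_upwards [erw_lan_diffusive_general μ ℱ X p hERW hp hp'] with ω hω
  exact hω hn ((hconv.isBigO_one ℝ).trans_isLittleO isLittleO_one_sqrt_log_natCast)
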